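/- Let η, ū : ℝ² → ℝ be infinitely differentiable functions of (x,t), let h₁, ρ₂, g be real constants and ρ₁ ≠ 0 a real constant. For each real δ define σ_δ = −ρ₁ ū + (δ/3) h₁ ρ₂ (η ū)_{xx}. Then there exist infinitely differentiable functions R₂, R₃ : ℝ² → ℝ, independent of δ, such that for every real δ and every (x,t): (σ_δ)_t − (h₁/ρ₁) σ_δ (σ_δ)_x − g h₁² (ρ₂ − ρ₁) η_x − (δ/3)(h₁² ρ₂/ρ₁²) ( σ_δ (η σ_δ)_{xx} )_x = −ρ₁ [ ū_t + h₁ ū ū_x + g h₁² (ρ₂/ρ₁ − 1) η_x − (δ/3)(h₁ ρ₂/ρ₁) (η ū)_{xxt} ] + δ² R₂(x,t) + δ³ R₃(x,t). In particular the second 'deep-water' Hamiltonian evolution equation for (η, σ) is equivalent, at order O(δ), to the second Boussinesq-type equation ū_t + h₁ ū ū_x + g h₁²(ρ₂/ρ₁ − 1) η_x − (δ/3) h₁ (ρ₂/ρ₁)(η ū)_{xxt} = 0. -/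

import Mathlib

/-- Partial derivative in the spatial variable `x` (first argument). -/
noncomputable def dX (f : ℝ → ℝ → ℝ) : ℝ → ℝ → ℝ :=
  fun x t => deriv (fun x' => f x' t) x

/-- Partial derivative in time `t` (second argument). -/
noncomputable def dT (f : ℝ → ℝ → ℝ) : ℝ → ℝ → ℝ :=
  fun x t => deriv (fun t' => f x t') t

/-- The tangential momentum shear of the deep-water regime,
`σ_δ = −ρ₁ ū + (δ/3) h₁ ρ₂ (η ū)_{xx}`. -/
noncomputable def sigmaDW (ρ₁ h₁ ρ₂ : ℝ) (η u : ℝ → ℝ → ℝ) (δ : ℝ) : ℝ → ℝ → ℝ :=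
  fun x t => -ρ₁ * u x t
    + (δ/3) * h₁ * ρ₂ * dX (dX (fun x' t' => η x' t' * u x' t')) x t

/-!
Write `L f = (η f)_{xx}`, `v = L ū`, `w = L v` and `ε = δ h₁ ρ₂ / 3`. Then `σ = -ρ₁ ū + ε v`, and
since `L` is linear, `L σ = -ρ₁ v + ε w`. Expanding in powers of `ε`,
`σ σ_x = ρ₁² ū ū_x - ρ₁ ε (ū v)_x + ε² v v_x` and
`(σ L σ)_x = ρ₁² (ū v)_x - ρ₁ ε ((ū w)_x + 2 v v_x) + ε² (v w)_x`.
In `(h₁/ρ₁) σ σ_x + (h₁/ρ₁²) ε (σ L σ)_x` the two terms `∓ h₁ ε (ū v)_x` cancel, so the only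
contribution of order `ε` to the equation is `ε v_t`; what is left over is of order `ε²` and `ε³`.
-/

section

open Function

variable {f k p q η u v w : ℝ → ℝ → ℝ} {m n : WithTop ℕ∞}

theorem hasDerivAt_dX (hf : Differentiable ℝ (uncurry f)) (x t : ℝ) :
    HasDerivAt (fun x' => f x' t) (dX f x t) x :=
  have slice : Differentiable ℝ fun x' => f x' t :=
    hf.comp (differentiable_id.prodMk (differentiable_const t))
  (slice x).hasDerivAt

theorem hasDerivAt_dT (hf : Differentiable ℝ (uncurry f)) (x t : ℝ) :
    HasDerivAt (fun t' => f x t') (dT f x t) t :=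
  have slice : Differentiable ℝ fun t' => f x t' :=
    hf.comp ((differentiable_const x).prodMk differentiable_id)
  (slice t).hasDerivAt

theorem dX_eq_fderiv (hf : Differentiable ℝ (uncurry f)) (x t : ℝ) :
    dX f x t = fderiv ℝ (uncurry f) (x, t) (1, 0) :=
  have horizontal_line : HasDerivAt (fun x' => (x', t)) (1, 0) x :=
    (hasDerivAt_id x).prodMk (hasDerivAt_const x t)
  have slice : HasDerivAt (fun x' => f x' t) (fderiv ℝ (uncurry f) (x, t) (1, 0)) x :=
    HasFDerivAt.comp_hasDerivAt (l := uncurry f) x (hf (x, t)).hasFDerivAt horizontal_line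
  slice.deriv

theorem contDiff_dX (hf : ContDiff ℝ n (uncurry f)) (hmn : m + 1 ≤ n) :
    ContDiff ℝ m (uncurry (dX f)) := by
  have hf_diff : Differentiable ℝ (uncurry f) :=
    (hf.of_le (le_add_self.trans hmn)).differentiable one_ne_zero
  have dX_eq : uncurry (dX f) = fun z => fderiv ℝ (uncurry f) z (1, 0) :=
    funext fun z => dX_eq_fderiv hf_diff z.1 z.2
  rw [dX_eq]
  exact (hf.fderiv_right hmn).clm_apply contDiff_const

theorem dX_mul (hf : Differentiable ℝ (uncurry f)) (hk : Differentiable ℝ (uncurry k)) (x t : ℝ) :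
    dX (fun x t => f x t * k x t) x t = dX f x t * k x t + f x t * dX k x t :=
  ((hasDerivAt_dX hf x t).mul (hasDerivAt_dX hk x t)).deriv

theorem dX_linear_combination (hf : Differentiable ℝ (uncurry f))
    (hk : Differentiable ℝ (uncurry k)) (a b : ℝ) :
    dX (fun x t => a * f x t + b * k x t) = fun x t => a * dX f x t + b * dX k x t := by
  funext x t
  exact (((hasDerivAt_dX hf x t).const_mul a).add ((hasDerivAt_dX hk x t).const_mul b)).deriv

theorem dT_linear_combination (hf : Differentiable ℝ (uncurry f))
    (hk : Differentiable ℝ (uncurry k)) (a b : ℝ) :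
    dT (fun x t => a * f x t + b * k x t) = fun x t => a * dT f x t + b * dT k x t := by
  funext x t
  exact (((hasDerivAt_dT hf x t).const_mul a).add ((hasDerivAt_dT hk x t).const_mul b)).deriv

theorem linear_combination_mul_dX (hf : Differentiable ℝ (uncurry f))
    (hk : Differentiable ℝ (uncurry k)) (a b x t : ℝ) :
    (a * f x t + b * k x t) * dX (fun x t => a * f x t + b * k x t) x t =
      a ^ 2 * (f x t * dX f x t) + a * b * dX (fun x t => f x t * k x t) x t +
        b ^ 2 * (k x t * dX k x t) := by
  rw [dX_linear_combination hf hk, dX_mul hf hk]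
  ring

theorem dX_mul_linear_combination (hf : Differentiable ℝ (uncurry f))
    (hk : Differentiable ℝ (uncurry k)) (hp : Differentiable ℝ (uncurry p))
    (hq : Differentiable ℝ (uncurry q)) (a b c d x t : ℝ) :
    dX (fun x t => (a * f x t + b * k x t) * (c * p x t + d * q x t)) x t =
      a * c * dX (fun x t => f x t * p x t) x t + a * d * dX (fun x t => f x t * q x t) x t +
        (b * c * dX (fun x t => k x t * p x t) x t +
          b * d * dX (fun x t => k x t * q x t) x t) := by
  have hfk : Differentiable ℝ (uncurry fun x t => a * f x t + b * k x t) :=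
    (hf.const_mul a).add (hk.const_mul b)
  have hpq : Differentiable ℝ (uncurry fun x t => c * p x t + d * q x t) :=
    (hp.const_mul c).add (hq.const_mul d)
  rw [dX_mul hfk hpq, dX_linear_combination hf hk, dX_linear_combination hp hq,
    dX_mul hf hp, dX_mul hf hq, dX_mul hk hp, dX_mul hk hq]
  ring

/-- The operator `v ↦ (η v)_{xx}`, through which all dispersive terms of the momentum equation are
expressed. -/
noncomputable def dispersion (η v : ℝ → ℝ → ℝ) : ℝ → ℝ → ℝ :=
  dX (dX fun x t => η x t * v x t)

theorem contDiff_dispersion (hη : ContDiff ℝ n (uncurry η))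
    (hv : ContDiff ℝ n (uncurry v)) (hmn : m + 2 ≤ n) :
    ContDiff ℝ m (uncurry (dispersion η v)) :=
  have hmn' : m + 1 + 1 ≤ n := by rwa [add_assoc, one_add_one_eq_two]
  contDiff_dX (contDiff_dX (hη.mul hv) hmn') le_rfl

theorem contDiff_dispersion_dispersion (hη : ContDiff ℝ n (uncurry η))
    (hv : ContDiff ℝ n (uncurry v)) (hmn : m + 4 ≤ n) :
    ContDiff ℝ m (uncurry (dispersion η (dispersion η v))) :=
  have hmn' : m + 2 + 2 ≤ n := by rwa [add_assoc, two_add_two_eq_four]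
  contDiff_dispersion (hη.of_le (le_self_add.trans hmn')) (contDiff_dispersion hη hv hmn') le_rfl

theorem differentiable_dispersion (hη : ContDiff ℝ 3 (uncurry η))
    (hv : ContDiff ℝ 3 (uncurry v)) : Differentiable ℝ (uncurry (dispersion η v)) :=
  (contDiff_dispersion hη hv (by norm_num)).differentiable one_ne_zero

theorem dispersion_linear_combination (hη : ContDiff ℝ 2 (uncurry η))
    (hv : ContDiff ℝ 2 (uncurry v)) (hw : ContDiff ℝ 2 (uncurry w)) (a b : ℝ) :
    dispersion η (fun x t => a * v x t + b * w x t) =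
      fun x t => a * dispersion η v x t + b * dispersion η w x t := by
  have product_linear : (fun x t => η x t * (a * v x t + b * w x t)) =
      fun x t => a * (η x t * v x t) + b * (η x t * w x t) := by
    funext x t
    ring
  have differentiable_mul {z : ℝ → ℝ → ℝ} (hz : ContDiff ℝ 2 (uncurry z)) :
      Differentiable ℝ (uncurry fun x t => η x t * z x t) :=
    (hη.mul hz).differentiable two_ne_zero
  have differentiable_dX_mul {z : ℝ → ℝ → ℝ} (hz : ContDiff ℝ 2 (uncurry z)) :
      Differentiable ℝ (uncurry (dX fun x t => η x t * z x t)) :=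
    (contDiff_dX (hη.mul hz) one_add_one_eq_two.le).differentiable one_ne_zero
  unfold dispersion
  rw [product_linear, dX_linear_combination (differentiable_mul hv) (differentiable_mul hw),
    dX_linear_combination (differentiable_dX_mul hv) (differentiable_dX_mul hw)]

/-- The coefficient of `δ²` in the discrepancy between the two momentum equations:
`(h₁/ρ₁) (h₁ρ₂/3)² ((ū w)_x + v v_x)` with `v = (η ū)_{xx}` and `w = (η v)_{xx}`. -/
noncomputable def quadraticRemainder (ρ₁ h₁ ρ₂ : ℝ) (η u : ℝ → ℝ → ℝ) : ℝ → ℝ → ℝ :=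
  fun x t => h₁ / ρ₁ * (h₁ * ρ₂ / 3) ^ 2 *
    (dX (fun x t => u x t * dispersion η (dispersion η u) x t) x t +
      dispersion η u x t * dX (dispersion η u) x t)

/-- The coefficient of `δ³` in the discrepancy between the two momentum equations:
`-(h₁/ρ₁²) (h₁ρ₂/3)³ (v w)_x` with `v = (η ū)_{xx}` and `w = (η v)_{xx}`. -/
noncomputable def cubicRemainder (ρ₁ h₁ ρ₂ : ℝ) (η u : ℝ → ℝ → ℝ) : ℝ → ℝ → ℝ :=
  fun x t => -(h₁ / ρ₁ ^ 2) * (h₁ * ρ₂ / 3) ^ 3 *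
    dX (fun x t => dispersion η u x t * dispersion η (dispersion η u) x t) x t

theorem contDiff_quadraticRemainder (hη : ContDiff ℝ n (uncurry η))
    (hu : ContDiff ℝ n (uncurry u)) (hmn : m + 5 ≤ n) (ρ₁ h₁ ρ₂ : ℝ) :
    ContDiff ℝ m (uncurry (quadraticRemainder ρ₁ h₁ ρ₂ η u)) := by
  have hmn' : m + 1 + 4 ≤ n := by rwa [add_assoc, show (1 + 4 : WithTop ℕ∞) = 5 by norm_num]
  have hD : ContDiff ℝ (m + 1) (uncurry (dispersion η u)) :=
    contDiff_dispersion hη hu (le_trans (by gcongr; norm_num) hmn')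
  have flux_dX : ContDiff ℝ m
      (uncurry (dX fun x t => u x t * dispersion η (dispersion η u) x t)) :=
    contDiff_dX ((hu.of_le (le_self_add.trans hmn')).mul
      (contDiff_dispersion_dispersion hη hu hmn')) le_rfl
  exact contDiff_const.mul
    (flux_dX.add ((hD.of_le le_self_add).mul (contDiff_dX hD le_rfl)))

theorem contDiff_cubicRemainder (hη : ContDiff ℝ n (uncurry η))
    (hu : ContDiff ℝ n (uncurry u)) (hmn : m + 5 ≤ n) (ρ₁ h₁ ρ₂ : ℝ) :
    ContDiff ℝ m (uncurry (cubicRemainder ρ₁ h₁ ρ₂ η u)) := by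
  have hmn' : m + 1 + 4 ≤ n := by rwa [add_assoc, show (1 + 4 : WithTop ℕ∞) = 5 by norm_num]
  have hD : ContDiff ℝ (m + 1) (uncurry (dispersion η u)) :=
    contDiff_dispersion hη hu (le_trans (by gcongr; norm_num) hmn')
  have flux_dX : ContDiff ℝ m
      (uncurry (dX fun x t => dispersion η u x t * dispersion η (dispersion η u) x t)) :=
    contDiff_dX (hD.mul (contDiff_dispersion_dispersion hη hu hmn')) le_rfl
  exact contDiff_const.mul flux_dX

theorem dT_sigmaDW (hη : ContDiff ℝ 3 (uncurry η)) (hu : ContDiff ℝ 3 (uncurry u))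
    (ρ₁ h₁ ρ₂ δ x t : ℝ) :
    dT (sigmaDW ρ₁ h₁ ρ₂ η u δ) x t =
      -ρ₁ * dT u x t + δ / 3 * h₁ * ρ₂ * dT (dispersion η u) x t :=
  congrFun₂ (dT_linear_combination (hu.differentiable three_ne_zero)
    (differentiable_dispersion hη hu) _ _) x t

theorem sigmaDW_mul_dX_sigmaDW (hη : ContDiff ℝ 3 (uncurry η)) (hu : ContDiff ℝ 3 (uncurry u))
    (ρ₁ h₁ ρ₂ δ x t : ℝ) :
    sigmaDW ρ₁ h₁ ρ₂ η u δ x t * dX (sigmaDW ρ₁ h₁ ρ₂ η u δ) x t =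
      ρ₁ ^ 2 * (u x t * dX u x t) -
        ρ₁ * (δ / 3 * h₁ * ρ₂) * dX (fun x t => u x t * dispersion η u x t) x t +
        (δ / 3 * h₁ * ρ₂) ^ 2 * (dispersion η u x t * dX (dispersion η u) x t) := by
  refine (linear_combination_mul_dX (hu.differentiable three_ne_zero)
    (differentiable_dispersion hη hu) _ _ x t).trans ?_
  ring

theorem dispersion_sigmaDW (hη : ContDiff ℝ 4 (uncurry η)) (hu : ContDiff ℝ 4 (uncurry u))
    (ρ₁ h₁ ρ₂ δ : ℝ) :
    dispersion η (sigmaDW ρ₁ h₁ ρ₂ η u δ) = fun x t =>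
      -ρ₁ * dispersion η u x t + δ / 3 * h₁ * ρ₂ * dispersion η (dispersion η u) x t :=
  dispersion_linear_combination (hη.of_le (by norm_num)) (hu.of_le (by norm_num))
    (contDiff_dispersion hη hu (by norm_num)) _ _

theorem dX_sigmaDW_mul_dispersion_sigmaDW (hη : ContDiff ℝ 5 (uncurry η))
    (hu : ContDiff ℝ 5 (uncurry u)) (ρ₁ h₁ ρ₂ δ x t : ℝ) :
    dX (fun x t => sigmaDW ρ₁ h₁ ρ₂ η u δ x t *
        dispersion η (sigmaDW ρ₁ h₁ ρ₂ η u δ) x t) x t =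
      ρ₁ ^ 2 * dX (fun x t => u x t * dispersion η u x t) x t -
        ρ₁ * (δ / 3 * h₁ * ρ₂) *
          (dX (fun x t => u x t * dispersion η (dispersion η u) x t) x t +
            2 * (dispersion η u x t * dX (dispersion η u) x t)) +
        (δ / 3 * h₁ * ρ₂) ^ 2 *
          dX (fun x t => dispersion η u x t * dispersion η (dispersion η u) x t) x t := by
  have hu_diff : Differentiable ℝ (uncurry u) := hu.differentiable (by norm_num)
  have hD : ContDiff ℝ 3 (uncurry (dispersion η u)) := contDiff_dispersion hη hu (by norm_num)
  have hD_diff := hD.differentiable three_ne_zero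
  have hDD_diff := differentiable_dispersion (hη.of_le (by norm_num)) hD
  rw [dispersion_sigmaDW (hη.of_le (by norm_num)) (hu.of_le (by norm_num))]
  unfold sigmaDW
  refine (dX_mul_linear_combination hu_diff hD_diff hD_diff hDD_diff _ _ _ _ x t).trans ?_
  rw [dX_mul hD_diff hD_diff]
  ring

end

theorem deep_water_momentum_equation_delta_expansion_general {m n : WithTop ℕ∞}
    (hmn : m + 5 ≤ n) (η u : ℝ → ℝ → ℝ) (hη : ContDiff ℝ n (Function.uncurry η))
    (hu : ContDiff ℝ n (Function.uncurry u)) (h₁ ρ₂ g ρ₁ : ℝ) (hρ₁ : ρ₁ ≠ 0) :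
    ∃ R₂ R₃ : ℝ → ℝ → ℝ,
      ContDiff ℝ m (Function.uncurry R₂) ∧
      ContDiff ℝ m (Function.uncurry R₃) ∧
      ∀ δ x t,
        dT (sigmaDW ρ₁ h₁ ρ₂ η u δ) x t
          - (h₁/ρ₁) * sigmaDW ρ₁ h₁ ρ₂ η u δ x t * dX (sigmaDW ρ₁ h₁ ρ₂ η u δ) x t
          - g * h₁^2 * (ρ₂ - ρ₁) * dX η x t
          - (δ/3) * (h₁^2 * ρ₂ / ρ₁^2) *
              dX (fun x' t' => sigmaDW ρ₁ h₁ ρ₂ η u δ x' t' *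
                dX (dX (fun y s => η y s * sigmaDW ρ₁ h₁ ρ₂ η u δ y s)) x' t') x t
        = -ρ₁ * (dT u x t + h₁ * u x t * dX u x t
              + g * h₁^2 * (ρ₂/ρ₁ - 1) * dX η x t
              - (δ/3) * (h₁ * ρ₂ / ρ₁) *
                  dT (dX (dX (fun x' t' => η x' t' * u x' t'))) x t)
          + δ^2 * R₂ x t + δ^3 * R₃ x t := by
  have hn : 5 ≤ n := le_add_self.trans hmn
  refine ⟨quadraticRemainder ρ₁ h₁ ρ₂ η u, cubicRemainder ρ₁ h₁ ρ₂ η u,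
    contDiff_quadraticRemainder hη hu hmn ρ₁ h₁ ρ₂, contDiff_cubicRemainder hη hu hmn ρ₁ h₁ ρ₂,
    fun δ x t => ?_⟩
  have hη₃ : ContDiff ℝ 3 (Function.uncurry η) := hη.of_le (le_trans (by norm_num) hn)
  have hu₃ : ContDiff ℝ 3 (Function.uncurry u) := hu.of_le (le_trans (by norm_num) hn)
  have time_term := dT_sigmaDW hη₃ hu₃ ρ₁ h₁ ρ₂ δ x t
  have advection_term := sigmaDW_mul_dX_sigmaDW hη₃ hu₃ ρ₁ h₁ ρ₂ δ x t
  have dispersive_term :=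
    dX_sigmaDW_mul_dispersion_sigmaDW (hη.of_le hn) (hu.of_le hn) ρ₁ h₁ ρ₂ δ x t
  unfold dispersion at *
  rw [time_term, mul_assoc (h₁ / ρ₁), advection_term, dispersive_term]
  simp only [quadraticRemainder, cubicRemainder, dispersion]
  field_simp
  ring

/-- The second deep-water Hamiltonian evolution equation agrees, at order `O(δ)`,
with the second Boussinesq-type equation: the discrepancy is an explicit
combination `δ²R₂ + δ³R₃` with `R₂, R₃` smooth and independent of `δ`. -/
theorem deep_water_momentum_equation_delta_expansion
    (η u : ℝ → ℝ → ℝ)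
    (hη : ContDiff ℝ (⊤ : ℕ∞) (fun p : ℝ × ℝ => η p.1 p.2))
    (hu : ContDiff ℝ (⊤ : ℕ∞) (fun p : ℝ × ℝ => u p.1 p.2))
    (h₁ ρ₂ g ρ₁ : ℝ) (hρ₁ : ρ₁ ≠ 0) :
    ∃ R₂ R₃ : ℝ → ℝ → ℝ,
      ContDiff ℝ (⊤ : ℕ∞) (fun p : ℝ × ℝ => R₂ p.1 p.2) ∧
      ContDiff ℝ (⊤ : ℕ∞) (fun p : ℝ × ℝ => R₃ p.1 p.2) ∧
      ∀ δ x t,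
        dT (sigmaDW ρ₁ h₁ ρ₂ η u δ) x t
          - (h₁/ρ₁) * sigmaDW ρ₁ h₁ ρ₂ η u δ x t * dX (sigmaDW ρ₁ h₁ ρ₂ η u δ) x t
          - g * h₁^2 * (ρ₂ - ρ₁) * dX η x t
          - (δ/3) * (h₁^2 * ρ₂ / ρ₁^2) *
              dX (fun x' t' => sigmaDW ρ₁ h₁ ρ₂ η u δ x' t' *
                dX (dX (fun y s => η y s * sigmaDW ρ₁ h₁ ρ₂ η u δ y s)) x' t') x t
        = -ρ₁ * (dT u x t + h₁ * u x t * dX u x t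
              + g * h₁^2 * (ρ₂/ρ₁ - 1) * dX η x t
              - (δ/3) * (h₁ * ρ₂ / ρ₁) *
                  dT (dX (dX (fun x' t' => η x' t' * u x' t'))) x t)
          + δ^2 * R₂ x t + δ^3 * R₃ x t := by
  exact deep_water_momentum_equation_delta_expansion_general le_rfl η u hη hu h₁ ρ₂ g ρ₁ hρ₁
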